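/- arXiv:math/0207098 — 2 statements merged into one kernel-verified Lean document; each statement's English description precedes it below -/
import Mathlib

section
/- Let K be a field, R = K[[u_1,…,u_m, v_1,…,v_r]], and π : R → R the K-algebra endomorphism setting u = 0, i.e., the coefficient of π(f) at an exponent (β,γ) equals the coefficient of f at (0,γ) if β = 0, and 0 otherwise. Let J be an ideal of R and let J_0 be the ideal of R generated by {π(f) : f ∈ J}. Then for every k ∈ ℕ, both R/(J + m_{k+1}) and R/(J_0 + m_{k+1}) are finite-dimensional K-vector spaces, and dim_K R/(J + m_{k+1}) ≤ dim_K R/(J_0 + m_{k+1}). That is, the Hilbert–Samuel function of R/J_0 majorizes the Hilbert–Samuel function of R/J. -/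
/-- Total degree of an exponent. -/
def expDegree {σ : Type*} (e : σ →₀ ℕ) : ℕ := e.sum fun _ v => v

/-- The ideal `m_k` of formal power series whose coefficients vanish at
every exponent of total degree `< k`. -/
def mIdl (K : Type*) [Field K] (σ : Type*) (k : ℕ) :
    Ideal (MvPowerSeries σ K) where
  carrier := {f | ∀ e : σ →₀ ℕ, expDegree e < k → MvPowerSeries.coeff e f = 0}
  add_mem' := by
    intro a b ha hb e he
    simp only [Set.mem_setOf_eq] at *
    rw [map_add, ha e he, hb e he, add_zero]
  zero_mem' := by
    intro e _
    simp
  smul_mem' := by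
    classical
    intro c f hf e he
    simp only [Set.mem_setOf_eq] at *
    rw [smul_eq_mul, MvPowerSeries.coeff_mul]
    refine Finset.sum_eq_zero fun p hp => ?_
    rw [Finset.HasAntidiagonal.mem_antidiagonal] at hp
    have hdeg : expDegree e = expDegree p.1 + expDegree p.2 := by
      rw [← hp]
      exact Finsupp.sum_add_index' (fun _ => rfl) (fun _ _ _ => rfl)
    rw [hf p.2 (by omega), mul_zero]

/-!
Filter `R` by the order in the variables `u`, i.e. by the weight giving each `uᵢ` weight `1` and
each `vⱼ` weight `0`. The ideal `J₀ + m_{k+1}` is homogeneous for this weight. If `h = a π(g)` with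
`g ∈ J`, then the part of degree `d` of `h` is `a_d π(g)`, where `a_d` is that of `a`; this agrees
with `a_d g ∈ J` up to terms of degree greater than `d`. So in every degree the initial forms of
`J + m_{k+1}` include those of `J₀ + m_{k+1}`. Since the series of `u`-order at least `k + 1` lie in
`m_{k+1}`, comparing the finitely many remaining graded pieces compares the codimensions.
-/

section Submodule

variable {K V : Type*} [DivisionRing K] [AddCommGroup V] [Module K V]

theorem rank_quotient_eq_rank_quotient_sup_add (P F : Submodule K V) :
    Module.rank K (V ⧸ P) = Module.rank K (V ⧸ P ⊔ F) + Module.rank K (F.map P.mkQ) := by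
  rw [← (Submodule.quotientQuotientEquivQuotientSup P F).rank_eq,
    Submodule.rank_quotient_add_rank]

theorem rank_map_mkQ_le_of_inf_le {P P₀ F : Submodule K V} (h : P₀ ⊓ F ≤ P) :
    Module.rank K (F.map P.mkQ) ≤ Module.rank K (F.map P₀.mkQ) := by
  have ker_le : LinearMap.ker (P₀.mkQ.domRestrict F) ≤ LinearMap.ker (P.mkQ.domRestrict F) := by
    simpa [LinearMap.ker_domRestrict, Submodule.submoduleOf, SetLike.le_def] using
      fun x hxF hxP₀ ↦ h ⟨hxP₀, hxF⟩
  rw [← LinearMap.range_domRestrict, ← LinearMap.range_domRestrict,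
    ← (P.mkQ.domRestrict F).quotKerEquivRange.rank_eq,
    ← (P₀.mkQ.domRestrict F).quotKerEquivRange.rank_eq]
  exact LinearMap.rank_le_of_surjective _ (Submodule.factor_surjective ker_le)

theorem rank_quotient_le_of_filtration {W W₀ : Submodule K V} {F : ℕ → Submodule K V}
    (hF : Antitone F) (hF_zero : F 0 = ⊤) {N : ℕ} (hFN : F N ≤ W)
    (h : ∀ d, W₀ ⊓ F d ≤ W ⊔ F (d + 1)) :
    Module.rank K (V ⧸ W) ≤ Module.rank K (V ⧸ W₀) := by
  have rank_sup_le (d : ℕ) : Module.rank K (V ⧸ W ⊔ F d) ≤ Module.rank K (V ⧸ W₀ ⊔ F d) := by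
    induction d with
    | zero => rw [hF_zero, sup_top_eq, sup_top_eq]
    | succ d ih =>
      have hsucc : F (d + 1) ≤ F d := hF d.le_succ
      have inf_le : (W₀ ⊔ F (d + 1)) ⊓ F d ≤ W ⊔ F (d + 1) := by
        rw [sup_comm, sup_inf_assoc_of_le _ hsucc]
        exact sup_le le_sup_right (h d)
      rw [rank_quotient_eq_rank_quotient_sup_add (W ⊔ F (d + 1)) (F d),
        rank_quotient_eq_rank_quotient_sup_add (W₀ ⊔ F (d + 1)) (F d),
        sup_assoc, sup_assoc, sup_eq_right.2 hsucc]
      exact add_le_add ih (rank_map_mkQ_le_of_inf_le inf_le)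
  calc Module.rank K (V ⧸ W) = Module.rank K (V ⧸ W ⊔ F N) := by rw [sup_eq_left.2 hFN]
    _ ≤ Module.rank K (V ⧸ W₀ ⊔ F N) := rank_sup_le N
    _ ≤ Module.rank K (V ⧸ W₀) :=
      LinearMap.rank_le_of_surjective _ (Submodule.factor_surjective le_sup_left)

end Submodule

section WeightFiltration

open Finsupp MvPowerSeries

variable {σ R : Type*}

theorem weight_indicator_one_eq_zero_iff (S : Set σ) (e : σ →₀ ℕ) :
    weight (S.indicator 1) e = 0 ↔ ∀ i ∈ S, e i = 0 := by
  simp only [weight_apply, Finsupp.sum, Finset.sum_eq_zero_iff, smul_eq_mul, mul_eq_zero,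
    Set.indicator_apply_eq_zero, Finsupp.mem_support_iff, Pi.one_apply, one_ne_zero]
  grind

/-- The series of weighted order at least `d`, for variables weighted by `w`. This is an ideal, but
it is encoded as a submodule over the coefficients, because the dimensions of quotients are
compared over these. -/
def weightFiltration (R : Type*) [Semiring R] (w : σ → ℕ) (d : ℕ) :
    Submodule R (MvPowerSeries σ R) where
  carrier := {f | ∀ e, weight w e < d → coeff e f = 0}
  add_mem' hf hg e he := by rw [map_add, hf e he, hg e he, add_zero]
  zero_mem' _ _ := map_zero _
  smul_mem' c f hf e he := by rw [map_smul, hf e he, smul_zero]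

section Semiring

variable [Semiring R]

theorem mem_weightFiltration {w : σ → ℕ} {d : ℕ} {f : MvPowerSeries σ R} :
    f ∈ weightFiltration R w d ↔ ∀ e, weight w e < d → coeff e f = 0 :=
  Iff.rfl

theorem weightFiltration_antitone (w : σ → ℕ) : Antitone (weightFiltration R w) :=
  fun _ _ hd _ hf e he ↦ hf e (he.trans_le hd)

theorem weightFiltration_zero (w : σ → ℕ) : weightFiltration R w 0 = ⊤ :=
  eq_top_iff.2 fun _ _ _ he ↦ absurd he (Nat.not_lt_zero _)

theorem weightFiltration_mono {w w' : σ → ℕ} (hw : w ≤ w') (d : ℕ) :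
    weightFiltration R w d ≤ weightFiltration R w' d := by
  intro f hf e he
  refine hf e (lt_of_le_of_lt ?_ he)
  simp only [weight_apply]
  exact Finsupp.sum_le_sum fun i _ ↦ Nat.mul_le_mul_left _ (hw i)

theorem weightedHomogeneousComponent_mem_weightFiltration (w : σ → ℕ) (d : ℕ) {w' : σ → ℕ}
    {k : ℕ} {f : MvPowerSeries σ R} (hf : f ∈ weightFiltration R w' k) :
    weightedHomogeneousComponent w d f ∈ weightFiltration R w' k := by
  intro e he
  rw [coeff_weightedHomogeneousComponent, hf e he, ite_self]

end Semiring

section Ring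

variable [Ring R]

theorem sub_weightedHomogeneousComponent_mem_weightFiltration {w : σ → ℕ} {d : ℕ}
    {f : MvPowerSeries σ R} (hf : f ∈ weightFiltration R w d) :
    f - weightedHomogeneousComponent w d f ∈ weightFiltration R w (d + 1) := by
  intro e he
  rw [map_sub, coeff_weightedHomogeneousComponent]
  split_ifs with hed
  · exact sub_self _
  · rw [hf e (by omega), sub_zero]

theorem weightedHomogeneousComponent_mul_component_zero_sub_mem (w : σ → ℕ) (d : ℕ)
    (a g : MvPowerSeries σ R) :
    weightedHomogeneousComponent w d (a * weightedHomogeneousComponent w 0 g) -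
      weightedHomogeneousComponent w d a * g ∈ weightFiltration R w (d + 1) := by
  classical
  intro e he
  rw [map_sub, sub_eq_zero, coeff_weightedHomogeneousComponent, coeff_mul, coeff_mul]
  simp only [coeff_weightedHomogeneousComponent]
  have weight_add {p : (σ →₀ ℕ) × (σ →₀ ℕ)} (hp : p ∈ Finset.HasAntidiagonal.antidiagonal e) :
      weight w p.1 + weight w p.2 = weight w e := by
    rw [← map_add, Finset.HasAntidiagonal.mem_antidiagonal.1 hp]
  split_ifs with hed
  · refine Finset.sum_congr rfl fun p hp ↦ ?_
    have weight_fst_eq_iff : weight w p.1 = d ↔ weight w p.2 = 0 := by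
      have := weight_add hp
      omega
    simp only [weight_fst_eq_iff, mul_ite, ite_mul, mul_zero, zero_mul]
  · refine (Finset.sum_eq_zero fun p hp ↦ ?_).symm
    have weight_fst_ne : weight w p.1 ≠ d := by
      have := weight_add hp
      omega
    rw [if_neg weight_fst_ne, zero_mul]

theorem finite_quotient_weightFiltration [Finite σ] {w : σ → ℕ} (hw : ∀ i, w i ≠ 0) (d : ℕ) :
    Module.Finite R (MvPowerSeries σ R ⧸ weightFiltration R w d) := by
  have := (finite_of_nat_weight_lt w hw d).to_subtype
  let coeffs : MvPowerSeries σ R →ₗ[R] ({e : σ →₀ ℕ | weight w e < d} → R) :=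
    LinearMap.pi fun e ↦ coeff e.1
  have ker_coeffs : LinearMap.ker coeffs = weightFiltration R w d := by
    ext f
    simp [coeffs, LinearMap.ker_pi, mem_weightFiltration]
  have coeffs_surjective : Function.Surjective coeffs := fun v ↦
    ⟨Function.extend Subtype.val v 0, funext fun e ↦ Subtype.val_injective.extend_apply v 0 e⟩
  rw [← ker_coeffs]
  exact Module.Finite.equiv (coeffs.quotKerEquivOfSurjective coeffs_surjective).symm

end Ring

section CommRing

variable [CommRing R]

theorem weightedHomogeneousComponent_mem_sup_of_mem_span (w : σ → ℕ) (d : ℕ)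
    {J : Ideal (MvPowerSeries σ R)} {h : MvPowerSeries σ R}
    (hh : h ∈ Ideal.span (weightedHomogeneousComponent w 0 '' J)) :
    weightedHomogeneousComponent w d h ∈
      J.restrictScalars R ⊔ weightFiltration R w (d + 1) := by
  induction hh using Submodule.closure_induction with
  | zero => rw [map_zero]; exact zero_mem _
  | add x y _ _ hx hy => rw [map_add]; exact add_mem hx hy
  | smul_mem a x hx =>
    obtain ⟨g, hg, rfl⟩ := hx
    exact Submodule.mem_sup.2 ⟨_, J.mul_mem_left (weightedHomogeneousComponent w d a) hg, _,
      weightedHomogeneousComponent_mul_component_zero_sub_mem w d a g, add_sub_cancel _ _⟩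

theorem span_component_zero_sup_inf_weightFiltration_le (w w' : σ → ℕ) (d k : ℕ)
    (J : Ideal (MvPowerSeries σ R)) :
    ((Ideal.span (weightedHomogeneousComponent w 0 '' J)).restrictScalars R ⊔
        weightFiltration R w' k) ⊓ weightFiltration R w d ≤
      J.restrictScalars R ⊔ weightFiltration R w' k ⊔ weightFiltration R w (d + 1) := by
  rintro f ⟨hf, hfd⟩
  obtain ⟨h, hh, t, ht, rfl⟩ := Submodule.mem_sup.1 hf
  have hcomp_h := weightedHomogeneousComponent_mem_sup_of_mem_span w d hh
  have hcomp_t := weightedHomogeneousComponent_mem_weightFiltration w d ht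
  have hrest := sub_weightedHomogeneousComponent_mem_weightFiltration hfd
  rw [← sub_add_cancel (h + t) (weightedHomogeneousComponent w d (h + t)), map_add]
  rw [map_add] at hrest
  exact add_mem (Submodule.mem_sup_right hrest)
    (add_mem (SetLike.le_def.1 (sup_le_sup_right le_sup_left _) hcomp_h)
      (Submodule.mem_sup_left (Submodule.mem_sup_right hcomp_t)))

end CommRing

end WeightFiltration

section HilbertSamuel

open Finsupp MvPowerSeries

variable {K σ : Type*} [Field K]

theorem restrictScalars_mIdl (k : ℕ) :
    (mIdl K σ k).restrictScalars K = weightFiltration K 1 k := by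
  ext f
  rw [mem_weightFiltration, Pi.one_def, ← degree_eq_weight_one]
  rfl

theorem restrictScalars_sup_mIdl (J : Ideal (MvPowerSeries σ K)) (k : ℕ) :
    (J ⊔ mIdl K σ k).restrictScalars K =
      J.restrictScalars K ⊔ weightFiltration K 1 k := by
  rw [← restrictScalars_mIdl, Submodule.restrictScalars_sup]

instance finite_quotient_sup_mIdl [Finite σ] (J : Ideal (MvPowerSeries σ K)) (k : ℕ) :
    Module.Finite K (MvPowerSeries σ K ⧸ (J ⊔ mIdl K σ k)) := by
  have := finite_quotient_weightFiltration (R := K) (w := 1) (fun _ : σ ↦ one_ne_zero) k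
  have hle : weightFiltration K 1 k ≤ (J ⊔ mIdl K σ k).restrictScalars K :=
    (restrictScalars_sup_mIdl J k).symm ▸ le_sup_right
  have := Module.Finite.of_surjective _ (Submodule.factor_surjective hle)
  exact Module.Finite.equiv (Submodule.Quotient.restrictScalarsEquiv K (J ⊔ mIdl K σ k))

theorem rank_quotient_sup_mIdl_le {w : σ → ℕ} (hw : w ≤ 1) (J : Ideal (MvPowerSeries σ K))
    (k : ℕ) :
    Module.rank K (MvPowerSeries σ K ⧸ (J ⊔ mIdl K σ k)) ≤
      Module.rank K (MvPowerSeries σ K ⧸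
        (Ideal.span (weightedHomogeneousComponent w 0 '' J) ⊔ mIdl K σ k)) := by
  rw [← (Submodule.Quotient.restrictScalarsEquiv K (J ⊔ mIdl K σ k)).rank_eq,
    ← (Submodule.Quotient.restrictScalarsEquiv K (_ ⊔ mIdl K σ k)).rank_eq,
    restrictScalars_sup_mIdl, restrictScalars_sup_mIdl]
  exact rank_quotient_le_of_filtration (weightFiltration_antitone w) (weightFiltration_zero w)
    ((weightFiltration_mono hw k).trans le_sup_right)
    fun d ↦ span_component_zero_sup_inf_weightFiltration_le w 1 d k J

theorem stmt_12_general {ι : Type*} (u : ι → σ) [∀ e : σ →₀ ℕ, Decidable (∀ i, e (u i) = 0)]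
    (π : MvPowerSeries σ K → MvPowerSeries σ K)
    (hπ : ∀ f e, coeff e (π f) = if ∀ i, e (u i) = 0 then coeff e f else 0)
    (J : Ideal (MvPowerSeries σ K)) (k : ℕ) :
    Module.rank K (MvPowerSeries σ K ⧸ (J ⊔ mIdl K σ k)) ≤
      Module.rank K (MvPowerSeries σ K ⧸ (Ideal.span (π '' J) ⊔ mIdl K σ k)) := by
  let w : σ → ℕ := (Set.range u).indicator 1
  have hπw : π = weightedHomogeneousComponent w 0 := by
    ext f e
    simp only [hπ, coeff_weightedHomogeneousComponent, w,
      weight_indicator_one_eq_zero_iff, Set.forall_mem_range]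
  rw [hπw]
  exact rank_quotient_sup_mIdl_le (Set.indicator_le_self _ _) J k

end HilbertSamuel

/-- **The Hilbert–Samuel function of the fibre majorizes that of the total
space (part (a) of the proof of Theorem 6.18 of Bierstone–Milman,
"Desingularization algorithms I").**
Let `R = K[[u₁,…,u_m, v₁,…,v_r]]` and `π : R → R` the `K`-algebra
endomorphism setting `u = 0` (the coefficient of `π(f)` at `(β,γ)` is the
coefficient of `f` at `(0,γ)` if `β = 0`, and `0` otherwise).  Let `J` be
an ideal and `J₀` the ideal generated by `π(J)`.  Then for every `k`,
both `R/(J + m^{k+1})` and `R/(J₀ + m^{k+1})` are finite-dimensional over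
`K` and `dim R/(J + m^{k+1}) ≤ dim R/(J₀ + m^{k+1})`. -/
theorem stmt_12 {K : Type*} [Field K] {m r : ℕ}
    (π : MvPowerSeries (Fin m ⊕ Fin r) K →ₐ[K] MvPowerSeries (Fin m ⊕ Fin r) K)
    (hπ : ∀ (f : MvPowerSeries (Fin m ⊕ Fin r) K) (e : Fin m ⊕ Fin r →₀ ℕ),
      MvPowerSeries.coeff e (π f) =
        if ∀ i : Fin m, e (Sum.inl i) = 0 then MvPowerSeries.coeff e f else 0)
    (J : Ideal (MvPowerSeries (Fin m ⊕ Fin r) K)) (k : ℕ) :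
    Module.Finite K
      (MvPowerSeries (Fin m ⊕ Fin r) K ⧸ (J ⊔ mIdl K (Fin m ⊕ Fin r) (k + 1))) ∧
    Module.Finite K
      (MvPowerSeries (Fin m ⊕ Fin r) K ⧸
        (Ideal.span (⇑π '' (J : Set (MvPowerSeries (Fin m ⊕ Fin r) K))) ⊔
          mIdl K (Fin m ⊕ Fin r) (k + 1))) ∧
    Module.finrank K
      (MvPowerSeries (Fin m ⊕ Fin r) K ⧸ (J ⊔ mIdl K (Fin m ⊕ Fin r) (k + 1)))
      ≤ Module.finrank K
        (MvPowerSeries (Fin m ⊕ Fin r) K ⧸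
          (Ideal.span (⇑π '' (J : Set (MvPowerSeries (Fin m ⊕ Fin r) K))) ⊔
            mIdl K (Fin m ⊕ Fin r) (k + 1))) :=
  ⟨inferInstance, inferInstance, Cardinal.toNat_le_toNat
    (stmt_12_general Sum.inl π hπ J (k + 1)) (Module.rank_lt_aleph0 K _)⟩
end

section
/- Let K be a field and R = K[[u_1,…,u_m, v_1,…,v_r]] (n = m + r variables). Order the exponents δ ∈ ℕ^n by: δ < δ' iff |δ| < |δ'|, or |δ| = |δ'| and δ precedes δ' in the lexicographic order on coordinates taken in the order u_1,…,u_m, v_1,…,v_r (a smaller entry at the first differing coordinate meaning smaller); this is a well-order on ℕ^n. For nonzero f ∈ R, let exp(f) be the smallest element of the support of f under this order, and for an ideal J of R let 𝔑(J) := {exp(f) : f ∈ J, f ≠ 0} (the diagram of initial exponents of J). Let π : R → R be the K-algebra endomorphism setting u = 0 (the coefficient of π(f) at (β,γ) equals the coefficient of f at (0,γ) if β = 0, and 0 otherwise), let J be an ideal of R, and let J_0 be the ideal generated by {π(f) : f ∈ J}. If dim_K R/(J + m_{k+1}) = dim_K R/(J_0 + m_{k+1}) for every k ∈ ℕ (equality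 of Hilbert–Samuel functions), then 𝔑(J) = 𝔑(J_0). -/
/-- Enumeration of the variables of `K[[u₁,…,u_m, v₁,…,v_r]]` in the
order `u₁,…,u_m, v₁,…,v_r`. -/
def idxNum {m r : ℕ} : Fin m ⊕ Fin r → ℕ
  | Sum.inl i => (i : ℕ)
  | Sum.inr j => m + (j : ℕ)

/-- The order on exponents: `δ < δ'` iff `|δ| < |δ'|`, or `|δ| = |δ'|`
and `δ` precedes `δ'` lexicographically in the coordinate order
`u₁,…,u_m, v₁,…,v_r` (a smaller entry at the first differing coordinate
meaning smaller). -/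
def expLt {m r : ℕ} (δ δ' : Fin m ⊕ Fin r →₀ ℕ) : Prop :=
  expDegree δ < expDegree δ' ∨
    (expDegree δ = expDegree δ' ∧
      ∃ j : Fin m ⊕ Fin r, δ j < δ' j ∧
        ∀ j' : Fin m ⊕ Fin r, idxNum j' < idxNum j → δ j' = δ' j')

/-- `e = exp(f)`: `e` is the smallest element of the support of `f`
under the order `expLt`. -/
def isInitExp {K : Type*} [Field K] {m r : ℕ}
    (f : MvPowerSeries (Fin m ⊕ Fin r) K) (e : Fin m ⊕ Fin r →₀ ℕ) : Prop :=
  MvPowerSeries.coeff e f ≠ 0 ∧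
    ∀ e' : Fin m ⊕ Fin r →₀ ℕ, MvPowerSeries.coeff e' f ≠ 0 →
      e' = e ∨ expLt e e'

/-- `𝔑(J)`: the diagram of initial exponents of the ideal `J`. -/
def diagram {K : Type*} [Field K] {m r : ℕ}
    (J : Ideal (MvPowerSeries (Fin m ⊕ Fin r) K)) :
    Set (Fin m ⊕ Fin r →₀ ℕ) :=
  {e | ∃ f ∈ J, f ≠ 0 ∧ isInitExp f e}

/-!
For any total order on exponents, the space of `k`-jets of elements of an ideal has exactly as many
initial exponents as its dimension. So if `J` and `J₀` have the same Hilbert–Samuel function, an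
inclusion between their sets of initial exponents of `k`-jets, for whichever order, is an equality.

Compare first the `u`-parts of exponents, and then the exponents in the given order. For this
elimination order the set of `J₀` lies in that of `J`: the coefficient of `u^b` in an element of
`J₀` has the form `f(0, v)` with `f ∈ J`, and `u^b f` has the same part of lowest order. The
resulting equality descends to the given order. Indeed an exponent of degree `≤ k` that precedes
one of degree `k` in the elimination order does so in the given order too, so every initial exponent
of `J` of degree `k` is one for the elimination order; and an initial exponent of `J₀` for the
elimination order is one for the given order, because `J₀` contains the `u^b`-part of each of its
elements.
-/

section LeadingIndices

variable {K ι α : Type*} [LinearOrder α] {κ : ι → α}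

/-- The pivots of a space of vectors: the indices at which some vector of `V` has its first nonzero
entry, the entries being ordered by the key `κ`. The order is carried by a key rather than by `ι`
because the argument compares two orders on the same index type. -/
def leadingIndices [Semiring K] (κ : ι → α) (V : Submodule K (ι → K)) : Set ι :=
  {i | ∃ f ∈ V, f i ≠ 0 ∧ ∀ j, κ j < κ i → f j = 0}

lemma exists_ne_zero_forall_lt_eq_zero {M : Type*} [Zero M] [Finite ι] (κ : ι → α) {f : ι → M}
    (hf : f ≠ 0) : ∃ i, f i ≠ 0 ∧ ∀ j, κ j < κ i → f j = 0 := by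
  obtain ⟨i, hi, hmin⟩ := (Function.support f).toFinite.exists_minimalFor κ _
    (Function.support_nonempty_iff.2 hf)
  exact ⟨i, hi, fun j hji => by_contra fun hj => (hmin hj hji.le).not_gt hji⟩

variable [DivisionRing K]

lemma finrank_le_ncard_leadingIndices [Finite ι] (κ : ι → α) (V : Submodule K (ι → K)) :
    Module.finrank K V ≤ (leadingIndices κ V).ncard := by
  classical
  have := Fintype.ofFinite ι
  let restrict : V →ₗ[K] (leadingIndices κ V → K) :=
    (LinearMap.funLeft K K Subtype.val).comp V.subtype
  have restrict_injective : Function.Injective restrict := by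
    rw [← LinearMap.ker_eq_bot, LinearMap.ker_eq_bot']
    rintro ⟨f, hfV⟩ hf
    by_contra hne
    obtain ⟨i, hi, hlt⟩ := exists_ne_zero_forall_lt_eq_zero κ (Subtype.coe_ne_coe.2 hne)
    exact hi (congrFun hf ⟨i, f, hfV, hi, hlt⟩)
  simpa only [Module.finrank_fintype_fun_eq_card, ← Nat.card_eq_fintype_card,
    Nat.card_coe_set_eq] using LinearMap.finrank_le_finrank_of_injective restrict_injective

lemma linearIndependent_of_forall_lt_eq_zero (hκ : Function.Injective κ) {v : ι → ι → K} {s : Set ι}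
    (hv : ∀ i ∈ s, v i i ≠ 0) (hlt : ∀ i ∈ s, ∀ j, κ j < κ i → v i j = 0) :
    LinearIndependent K fun i : s => v i := by
  classical
  refine linearIndependent_iff'.2 fun t c hc => ?_
  by_contra! h
  obtain ⟨i, ⟨hit, hci⟩, hmin⟩ := (t.finite_toSet.subset (Set.sep_subset _ _)).exists_minimalFor
    (fun i : s => κ i) {i : s | i ∈ t ∧ c i ≠ 0} h
  have hsum : (∑ j ∈ t, c j • v j) i = c i * v i i := by
    rw [Finset.sum_apply, Finset.sum_eq_single_of_mem i hit]
    · rfl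
    intro j hjt hji
    by_cases hcj : c j = 0
    · simp [hcj]
    have hij : κ i < κ j := (not_lt.1 fun hlt => (hmin ⟨hjt, hcj⟩ hlt.le).not_gt hlt).lt_of_ne
      fun h => hji (Subtype.ext (hκ h.symm))
    simp [hlt j j.2 i hij]
  exact mul_ne_zero hci (hv i i.2) (hsum.symm.trans (congrFun hc i))

lemma ncard_leadingIndices_le_finrank [Finite ι] (hκ : Function.Injective κ)
    (V : Submodule K (ι → K)) : (leadingIndices κ V).ncard ≤ Module.finrank K V := by
  classical
  have := Fintype.ofFinite ι
  choose! v hvV hv hlt using fun i (hi : i ∈ leadingIndices κ V) => hi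
  have hli : LinearIndependent K fun i : leadingIndices κ V => (⟨v i, hvV i i.2⟩ : V) :=
    LinearIndependent.of_comp V.subtype (linearIndependent_of_forall_lt_eq_zero hκ hv hlt)
  simpa only [← Nat.card_eq_fintype_card, Nat.card_coe_set_eq] using hli.fintype_card_le_finrank

lemma ncard_leadingIndices [Finite ι] (hκ : Function.Injective κ) (V : Submodule K (ι → K)) :
    (leadingIndices κ V).ncard = Module.finrank K V :=
  (ncard_leadingIndices_le_finrank hκ V).antisymm (finrank_le_ncard_leadingIndices κ V)

lemma leadingIndices_eq_of_subset_of_finrank_eq [Finite ι] (hκ : Function.Injective κ)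
    {V W : Submodule K (ι → K)} (hsub : leadingIndices κ V ⊆ leadingIndices κ W)
    (hrank : Module.finrank K V = Module.finrank K W) :
    leadingIndices κ V = leadingIndices κ W :=
  Set.eq_of_subset_of_ncard_le hsub
    (by rw [ncard_leadingIndices hκ, ncard_leadingIndices hκ, hrank])

end LeadingIndices

section Jets

open MvPowerSeries

variable {K σ α : Type*} [LinearOrder α] {κ : (σ →₀ ℕ) → α} {k : ℕ}

section CommSemiring

variable [CommSemiring K] {J : Ideal (MvPowerSeries σ K)}

/-- The `k`-jet of a power series: its coefficients at the exponents of total degree `≤ k`. -/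
noncomputable def jet (K σ : Type*) [CommSemiring K] (k : ℕ) :
    MvPowerSeries σ K →ₗ[K] ({e : σ →₀ ℕ // e.degree ≤ k} → K) :=
  LinearMap.pi fun e => coeff e.1

lemma jet_apply (f : MvPowerSeries σ K) (e : {e : σ →₀ ℕ // e.degree ≤ k}) :
    jet K σ k f e = coeff e.1 f := rfl

lemma jet_surjective : Function.Surjective (jet K σ k) := fun x => by
  classical
  refine ⟨fun e => if h : e.degree ≤ k then x ⟨e, h⟩ else 0, funext fun e => ?_⟩
  exact dif_pos e.2

/-- The space of `k`-jets of the elements of `J`, which is `(J + m_{k+1}) / m_{k+1}`. -/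
noncomputable def jets (k : ℕ) (J : Ideal (MvPowerSeries σ K)) :
    Submodule K ({e : σ →₀ ℕ // e.degree ≤ k} → K) :=
  (J.restrictScalars K).map (jet K σ k)

/-- The exponents of degree `≤ k` occurring as smallest exponents, for the key `κ`, of `k`-jets of
elements of `J`. -/
def jetInitialExponents (κ : (σ →₀ ℕ) → α) (k : ℕ) (J : Ideal (MvPowerSeries σ K)) :
    Set {e : σ →₀ ℕ // e.degree ≤ k} :=
  leadingIndices (fun e => κ e.1) (jets k J)

lemma mem_jetInitialExponents {e : {e : σ →₀ ℕ // e.degree ≤ k}} :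
    e ∈ jetInitialExponents κ k J ↔ ∃ f ∈ J, coeff e.1 f ≠ 0 ∧
      ∀ e' : σ →₀ ℕ, e'.degree ≤ k → κ e' < κ e → coeff e' f = 0 := by
  simp [jetInitialExponents, leadingIndices, jets, jet_apply]

/-- The diagram of initial exponents of `J` with respect to an arbitrary order on exponents, given
by the key `κ`. -/
def initialExponents (κ : (σ →₀ ℕ) → α) (J : Ideal (MvPowerSeries σ K)) : Set (σ →₀ ℕ) :=
  {e | ∃ f ∈ J, coeff e f ≠ 0 ∧ ∀ e', κ e' < κ e → coeff e' f = 0}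

lemma mem_jetInitialExponents_iff_mem_initialExponents
    (hdeg : ∀ e e' : σ →₀ ℕ, e.degree < e'.degree → κ e < κ e')
    {e : {e : σ →₀ ℕ // e.degree ≤ k}} :
    e ∈ jetInitialExponents κ k J ↔ e.1 ∈ initialExponents κ J := by
  rw [mem_jetInitialExponents]
  refine exists_congr fun f => and_congr_right fun _ => and_congr_right fun _ =>
    forall_congr' fun e' => ⟨fun h hlt => h ?_ hlt, fun h _ => h⟩
  exact (not_lt.1 fun h => (hdeg _ _ h).not_gt hlt).trans e.2

end CommSemiring

variable [Field K] {J J' : Ideal (MvPowerSeries σ K)}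

lemma ker_jet : LinearMap.ker (jet K σ k) = (mIdl K σ (k + 1)).restrictScalars K := by
  ext f
  simp only [LinearMap.mem_ker, funext_iff, jet_apply, Pi.zero_apply, Subtype.forall]
  exact ⟨fun h e he => h e (Nat.lt_succ_iff.1 he), fun h e he => h e (Nat.lt_succ_iff.2 he)⟩

lemma finrank_quotient_sup_mIdl (k : ℕ) (J : Ideal (MvPowerSeries σ K)) :
    Module.finrank K (MvPowerSeries σ K ⧸ (J ⊔ mIdl K σ (k + 1))) =
      Module.finrank K (({e : σ →₀ ℕ // e.degree ≤ k} → K) ⧸ jets k J) := by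
  have hker : LinearMap.ker ((jets k J).mkQ ∘ₗ jet K σ k) =
      (J ⊔ mIdl K σ (k + 1)).restrictScalars K := by
    rw [LinearMap.ker_comp, Submodule.ker_mkQ, jets, Submodule.comap_map_eq, ker_jet,
      Submodule.restrictScalars_sup]
  have hsurj : Function.Surjective ((jets k J).mkQ ∘ₗ jet K σ k) :=
    (jets k J).mkQ_surjective.comp jet_surjective
  exact ((Submodule.Quotient.restrictScalarsEquiv K _).symm ≪≫ₗ
    Submodule.quotEquivOfEq _ _ hker.symm ≪≫ₗ LinearMap.quotKerEquivOfSurjective _ hsurj).finrank_eq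

lemma finrank_jets_eq [Finite σ]
    (hdim : Module.finrank K (MvPowerSeries σ K ⧸ (J ⊔ mIdl K σ (k + 1))) =
      Module.finrank K (MvPowerSeries σ K ⧸ (J' ⊔ mIdl K σ (k + 1)))) :
    Module.finrank K (jets k J) = Module.finrank K (jets k J') := by
  have : Finite {e : σ →₀ ℕ // e.degree ≤ k} := Finsupp.finite_of_degree_le k
  rw [finrank_quotient_sup_mIdl, finrank_quotient_sup_mIdl] at hdim
  have hJ := (jets k J).finrank_quotient_add_finrank
  have hJ' := (jets k J').finrank_quotient_add_finrank
  omega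

lemma jetInitialExponents_eq_of_subset [Finite σ] (hκ : Function.Injective κ)
    (hdim : Module.finrank K (MvPowerSeries σ K ⧸ (J ⊔ mIdl K σ (k + 1))) =
      Module.finrank K (MvPowerSeries σ K ⧸ (J' ⊔ mIdl K σ (k + 1))))
    (hsub : jetInitialExponents κ k J ⊆ jetInitialExponents κ k J') :
    jetInitialExponents κ k J = jetInitialExponents κ k J' :=
  have : Finite {e : σ →₀ ℕ // e.degree ≤ k} := Finsupp.finite_of_degree_le k
  leadingIndices_eq_of_subset_of_finrank_eq (hκ.comp Subtype.val_injective) hsub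
    (finrank_jets_eq hdim)

end Jets

section LeftCoeff

open MvPowerSeries
open Finset.HasAntidiagonal (antidiagonal mem_antidiagonal)

variable {K σ τ : Type*}

lemma exists_eq_sumElim {M : Type*} [Zero M] (e : σ ⊕ τ →₀ M) :
    ∃ (b : σ →₀ M) (c : τ →₀ M), e = b.sumElim c :=
  ⟨_, _, (Finsupp.comapDomain_sumElim_comapDomain e).symm⟩

lemma sumElim_inj {M : Type*} [Zero M] {b b' : σ →₀ M} {c c' : τ →₀ M} :
    b.sumElim c = b'.sumElim c' ↔ b = b' ∧ c = c' :=
  Finsupp.sumFinsuppEquivProdFinsupp.symm.injective.eq_iff (a := (b, c)) (b := (b', c'))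
    |>.trans Prod.mk_inj

/-- The coefficient of `u^b` in a power series in the variables `u` (indexed by `σ`) and `v`
(indexed by `τ`), as a power series in `v`. -/
noncomputable def leftCoeff [Semiring K] (b : σ →₀ ℕ) :
    MvPowerSeries (σ ⊕ τ) K →ₗ[K] MvPowerSeries τ K :=
  LinearMap.pi fun c => coeff (b.sumElim c)

section Semiring

variable [Semiring K]

lemma coeff_leftCoeff (b : σ →₀ ℕ) (c : τ →₀ ℕ) (f : MvPowerSeries (σ ⊕ τ) K) :
    coeff c (leftCoeff b f) = coeff (b.sumElim c) f := rfl

lemma leftCoeff_monomial_mul (a b : σ →₀ ℕ) (f : MvPowerSeries (σ ⊕ τ) K) :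
    leftCoeff b (monomial (a.sumElim 0) 1 * f) =
      if a ≤ b then leftCoeff (b - a) f else 0 := by
  ext c
  have hle : a.sumElim (0 : τ →₀ ℕ) ≤ b.sumElim c ↔ a ≤ b := by
    simp [Finsupp.le_def]
  have hsub : b.sumElim c - a.sumElim 0 = (b - a).sumElim c := by
    ext (i | j) <;> simp
  rw [coeff_leftCoeff, coeff_monomial_mul, one_mul, hsub]
  simp only [hle]
  split_ifs <;> rfl

end Semiring

variable [CommSemiring K]

lemma leftCoeff_zero (f : MvPowerSeries (σ ⊕ τ) K) :
    leftCoeff 0 f = killCompl Function.Embedding.inr f := by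
  ext c
  rw [coeff_leftCoeff, coeff_killCompl, Finsupp.embDomain_inr]

lemma leftCoeff_rename_of_ne_zero {b : σ →₀ ℕ} (hb : b ≠ 0) (h : MvPowerSeries τ K) :
    leftCoeff b (rename (Function.Embedding.inr : τ ↪ σ ⊕ τ) h) = 0 := by
  ext c
  rw [coeff_leftCoeff, coeff_rename_eq_zero, map_zero]
  rintro ⟨c', hc'⟩
  have hsum : Finsupp.sumElim 0 c' = b.sumElim c := by
    rw [← hc', ← Finsupp.embDomain_inr, Finsupp.embDomain_eq_mapDomain]
  exact hb (sumElim_inj.1 hsum).1.symm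

lemma leftCoeff_mul [DecidableEq σ] (b : σ →₀ ℕ) (f g : MvPowerSeries (σ ⊕ τ) K) :
    leftCoeff b (f * g) = ∑ p ∈ antidiagonal b, leftCoeff p.1 f * leftCoeff p.2 g := by
  classical
  ext c
  simp only [coeff_leftCoeff, coeff_mul, map_sum]
  rw [← Finset.sum_product']
  symm
  refine Finset.sum_nbij (fun p => (p.1.1.sumElim p.2.1, p.1.2.sumElim p.2.2)) ?_ ?_ ?_
    fun _ _ => rfl
  · rintro ⟨⟨b₁, b₂⟩, c₁, c₂⟩ hp
    simp_all [← Finsupp.sumElim_add]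
  · rintro ⟨⟨b₁, b₂⟩, c₁, c₂⟩ - ⟨⟨b₁', b₂'⟩, c₁', c₂'⟩ - h
    simp_all [sumElim_inj]
  · rintro ⟨e₁, e₂⟩ he
    obtain ⟨b₁, c₁, rfl⟩ := exists_eq_sumElim e₁
    obtain ⟨b₂, c₂, rfl⟩ := exists_eq_sumElim e₂
    exact ⟨((b₁, b₂), c₁, c₂), by simpa [← Finsupp.sumElim_add, sumElim_inj] using he, rfl⟩

lemma leftCoeff_mul_rename (b : σ →₀ ℕ) (f : MvPowerSeries (σ ⊕ τ) K) (h : MvPowerSeries τ K) :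
    leftCoeff b (f * rename Function.Embedding.inr h) = leftCoeff b f * h := by
  classical
  rw [leftCoeff_mul, Finset.sum_eq_single (b, 0), leftCoeff_zero, killCompl_rename_app]
  · rintro ⟨p, q⟩ hpq hne
    rw [mem_antidiagonal] at hpq
    rw [leftCoeff_rename_of_ne_zero, mul_zero]
    rintro rfl
    exact hne (by simpa using hpq)
  · simp

end LeftCoeff

section Specialization

open MvPowerSeries

variable {K σ τ : Type*} [CommRing K] {J : Ideal (MvPowerSeries (σ ⊕ τ) K)}
  {g : MvPowerSeries (σ ⊕ τ) K}

/-- The ideal `J₀` of `K[[u, v]]` generated by the series `f(0, v)` for `f(u, v)` in `J`. -/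
noncomputable def specialization (J : Ideal (MvPowerSeries (σ ⊕ τ) K)) :
    Ideal (MvPowerSeries (σ ⊕ τ) K) :=
  (J.map (killCompl (R := K) (Function.Embedding.inr : τ ↪ σ ⊕ τ))).map
    (rename (R := K) (Function.Embedding.inr : τ ↪ σ ⊕ τ))

lemma leftCoeff_mem_map_killCompl (hg : g ∈ specialization J) (b : σ →₀ ℕ) :
    leftCoeff b g ∈ J.map (killCompl (R := K) (Function.Embedding.inr : τ ↪ σ ⊕ τ)) := by
  suffices ∀ a, leftCoeff b (a * g) ∈ J.map (killCompl Function.Embedding.inr) by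
    simpa only [one_mul] using this 1
  induction hg using Submodule.span_induction with
  | mem _ hx =>
    obtain ⟨h, hh, rfl⟩ := hx
    intro a
    rw [leftCoeff_mul_rename]
    exact Ideal.mul_mem_left _ _ hh
  | zero => simp
  | add x y _ _ hx hy =>
    intro a
    rw [mul_add, map_add]
    exact add_mem (hx a) (hy a)
  | smul c x _ hx =>
    intro a
    rw [smul_eq_mul, ← mul_assoc]
    exact hx (a * c)

lemma exists_mem_leftCoeff_eq (hg : g ∈ specialization J) (b : σ →₀ ℕ) :
    ∃ f ∈ J, leftCoeff b f = leftCoeff b g ∧ ∀ b', ¬ b ≤ b' → leftCoeff b' f = 0 := by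
  have hsurj : Function.Surjective (killCompl (R := K) (Function.Embedding.inr : τ ↪ σ ⊕ τ)) :=
    fun h => ⟨_, killCompl_rename_app h⟩
  obtain ⟨F, hF, hFg⟩ :=
    (Ideal.mem_map_iff_of_surjective _ hsurj).1 (leftCoeff_mem_map_killCompl hg b)
  refine ⟨monomial (b.sumElim 0) 1 * F, J.mul_mem_left _ hF, ?_, fun b' hb' => ?_⟩
  · rw [leftCoeff_monomial_mul, if_pos le_rfl, tsub_self, leftCoeff_zero, hFg]
  · rw [leftCoeff_monomial_mul, if_neg hb']

lemma exists_mem_specialization_leftCoeff_eq (hg : g ∈ specialization J) (b : σ →₀ ℕ) :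
    ∃ f ∈ specialization J, leftCoeff b f = leftCoeff b g ∧ ∀ b' ≠ b, leftCoeff b' f = 0 := by
  refine ⟨monomial (b.sumElim 0) 1 *
      rename Function.Embedding.inr (leftCoeff b g),
    Ideal.mul_mem_left _ _ (Ideal.mem_map_of_mem _ (leftCoeff_mem_map_killCompl hg b)), ?_,
    fun b' hb' => ?_⟩
  · rw [leftCoeff_monomial_mul, if_pos le_rfl, tsub_self, leftCoeff_zero, killCompl_rename_app]
  · rw [leftCoeff_monomial_mul]
    split_ifs with hle
    · exact leftCoeff_rename_of_ne_zero
        (fun hsub => hb' ((tsub_eq_zero_iff_le.1 hsub).antisymm hle)) _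
    · rfl

end Specialization

section Elimination

open MvPowerSeries

variable {σ τ α : Type*} {κ : (σ ⊕ τ →₀ ℕ) → α}

/-- The elimination order attached to `κ`: exponents are compared first lexicographically by their
`u`-part and then by `κ`. -/
noncomputable def elimKey (κ : (σ ⊕ τ →₀ ℕ) → α) (e : σ ⊕ τ →₀ ℕ) : Lex (σ →₀ ℕ) ×ₗ α :=
  toLex (toLex (e.comapDomain Sum.inl Sum.inl_injective.injOn), κ e)

lemma elimKey_injective (hκ : Function.Injective κ) : Function.Injective (elimKey κ) :=
  fun _ _ h => hκ (congrArg (fun x => (ofLex x).2) h)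

variable [LinearOrder σ] [LinearOrder α]

lemma elimKey_sumElim_lt_iff {b b' : σ →₀ ℕ} {c c' : τ →₀ ℕ} :
    elimKey κ (b'.sumElim c') < elimKey κ (b.sumElim c) ↔
      toLex b' < toLex b ∨ b' = b ∧ κ (b'.sumElim c') < κ (b.sumElim c) := by
  simp only [elimKey, Prod.Lex.toLex_lt_toLex, Finsupp.comapDomain_inl_sumElim, toLex_inj]

variable {K : Type*} [Field K] {k : ℕ} {J : Ideal (MvPowerSeries (σ ⊕ τ) K)}

lemma jetInitialExponents_elimKey_specialization_subset (κ : (σ ⊕ τ →₀ ℕ) → α) (k : ℕ)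
    (J : Ideal (MvPowerSeries (σ ⊕ τ) K)) :
    jetInitialExponents (elimKey κ) k (specialization J) ⊆ jetInitialExponents (elimKey κ) k J := by
  rintro ⟨e, he⟩ h
  obtain ⟨b, c, rfl⟩ := exists_eq_sumElim e
  obtain ⟨g, hg, hne, hlt⟩ := mem_jetInitialExponents.1 h
  obtain ⟨f, hf, hfg, hf0⟩ := exists_mem_leftCoeff_eq hg b
  refine mem_jetInitialExponents.2 ⟨f, hf, ?_, fun e' he' hlt' => ?_⟩
  · rwa [← coeff_leftCoeff, hfg]
  obtain ⟨b', c', rfl⟩ := exists_eq_sumElim e'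
  rw [← coeff_leftCoeff]
  obtain hb | ⟨rfl, -⟩ := elimKey_sumElim_lt_iff.1 hlt'
  · rw [hf0 b' fun hle => (Finsupp.toLex_monotone hle).not_gt hb, map_zero]
  · rw [hfg]
    exact hlt _ he' hlt'

lemma jetInitialExponents_elimKey_subset_jetInitialExponents_specialization
    (κ : (σ ⊕ τ →₀ ℕ) → α) (k : ℕ) (J : Ideal (MvPowerSeries (σ ⊕ τ) K)) :
    jetInitialExponents (elimKey κ) k (specialization J) ⊆
      jetInitialExponents κ k (specialization J) := by
  rintro ⟨e, he⟩ h
  obtain ⟨b, c, rfl⟩ := exists_eq_sumElim e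
  obtain ⟨g, hg, hne, hlt⟩ := mem_jetInitialExponents.1 h
  obtain ⟨f, hf, hfg, hf0⟩ := exists_mem_specialization_leftCoeff_eq hg b
  refine mem_jetInitialExponents.2 ⟨f, hf, ?_, fun e' he' hlt' => ?_⟩
  · rwa [← coeff_leftCoeff, hfg]
  obtain ⟨b', c', rfl⟩ := exists_eq_sumElim e'
  rw [← coeff_leftCoeff]
  obtain rfl | hb := eq_or_ne b' b
  · rw [hfg]
    exact hlt _ he' (elimKey_sumElim_lt_iff.2 (Or.inr ⟨rfl, hlt'⟩))
  · rw [hf0 b' hb, map_zero]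

lemma mem_jetInitialExponents_elimKey_of_degree_eq
    (hdeg : ∀ e e' : σ ⊕ τ →₀ ℕ, e.degree < e'.degree → κ e < κ e')
    (hlex : ∀ (b b' : σ →₀ ℕ) (c c' : τ →₀ ℕ), (b.sumElim c).degree = (b'.sumElim c').degree →
      toLex b < toLex b' → κ (b.sumElim c) < κ (b'.sumElim c'))
    {e : {e : σ ⊕ τ →₀ ℕ // e.degree ≤ k}} (hek : e.1.degree = k)
    (he : e ∈ jetInitialExponents κ k J) : e ∈ jetInitialExponents (elimKey κ) k J := by
  obtain ⟨f, hf, hne, hlt⟩ := mem_jetInitialExponents.1 he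
  refine mem_jetInitialExponents.2 ⟨f, hf, hne, fun e' he' hlt' => hlt e' he' ?_⟩
  obtain hlow | htop := (he'.trans_eq hek.symm).lt_or_eq
  · exact hdeg _ _ hlow
  obtain ⟨b, c, hbc⟩ := exists_eq_sumElim e.1
  obtain ⟨b', c', rfl⟩ := exists_eq_sumElim e'
  rw [hbc] at hlt' htop ⊢
  obtain hb | ⟨-, hκ⟩ := elimKey_sumElim_lt_iff.1 hlt'
  · exact hlex _ _ _ _ htop hb
  · exact hκ

theorem stmt_15_general [Finite σ] [Finite τ] (hκ : Function.Injective κ)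
    (hdeg : ∀ e e' : σ ⊕ τ →₀ ℕ, e.degree < e'.degree → κ e < κ e')
    (hlex : ∀ (b b' : σ →₀ ℕ) (c c' : τ →₀ ℕ), (b.sumElim c).degree = (b'.sumElim c').degree →
      toLex b < toLex b' → κ (b.sumElim c) < κ (b'.sumElim c'))
    (hdim : ∀ k, Module.finrank K (MvPowerSeries (σ ⊕ τ) K ⧸ (J ⊔ mIdl K (σ ⊕ τ) (k + 1))) =
      Module.finrank K
        (MvPowerSeries (σ ⊕ τ) K ⧸ (specialization J ⊔ mIdl K (σ ⊕ τ) (k + 1)))) :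
    initialExponents κ J = initialExponents κ (specialization J) := by
  have hsub : initialExponents κ J ⊆ initialExponents κ (specialization J) := fun e he => by
    let e' : {e' : σ ⊕ τ →₀ ℕ // e'.degree ≤ e.degree} := ⟨e, le_rfl⟩
    have hmem : e' ∈ jetInitialExponents (elimKey κ) e.degree J :=
      mem_jetInitialExponents_elimKey_of_degree_eq hdeg hlex rfl
        ((mem_jetInitialExponents_iff_mem_initialExponents hdeg).2 he)
    rw [← jetInitialExponents_eq_of_subset (elimKey_injective hκ) (hdim e.degree).symm
      (jetInitialExponents_elimKey_specialization_subset κ _ J)] at hmem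
    exact (mem_jetInitialExponents_iff_mem_initialExponents hdeg).1
      (jetInitialExponents_elimKey_subset_jetInitialExponents_specialization κ _ J hmem)
  have hjets (k : ℕ) : jetInitialExponents κ k J = jetInitialExponents κ k (specialization J) :=
    jetInitialExponents_eq_of_subset hκ (hdim k) fun e he =>
      (mem_jetInitialExponents_iff_mem_initialExponents hdeg).2
        (hsub ((mem_jetInitialExponents_iff_mem_initialExponents hdeg).1 he))
  refine hsub.antisymm fun e he => ?_
  rw [← mem_jetInitialExponents_iff_mem_initialExponents hdeg (e := ⟨e, le_rfl⟩)] at he ⊢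
  rwa [hjets]

end Elimination

section DegLexKey

variable {σ τ : Type*}

/-- The key of the degree-lexicographic order on exponents in which the variables of `σ` precede
those of `τ`. -/
noncomputable def degLexKey (e : σ ⊕ τ →₀ ℕ) : DegLex (σ ⊕ₗ τ →₀ ℕ) :=
  toDegLex (Finsupp.equivMapDomain toLex e)

lemma degLexKey_injective : Function.Injective (degLexKey : (σ ⊕ τ →₀ ℕ) → _) :=
  (Finsupp.equivCongrLeft toLex).injective

variable [LinearOrder σ] [LinearOrder τ]

lemma degLexKey_lt_iff {e e' : σ ⊕ τ →₀ ℕ} :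
    degLexKey e < degLexKey e' ↔ e.degree < e'.degree ∨ e.degree = e'.degree ∧
      ∃ i, (∀ j, toLex j < toLex i → e j = e' j) ∧ e i < e' i := by
  simp only [degLexKey, Finsupp.DegLex.lt_iff, ofDegLex_toDegLex,
    Finsupp.equivMapDomain_eq_mapDomain, Finsupp.degree_mapDomain]
  simp only [← Finsupp.equivMapDomain_eq_mapDomain, Finsupp.Lex.lt_iff]
  rfl

lemma degLexKey_lt_of_degree_lt {e e' : σ ⊕ τ →₀ ℕ} (h : e.degree < e'.degree) :
    degLexKey e < degLexKey e' :=
  degLexKey_lt_iff.2 (Or.inl h)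

lemma degLexKey_sumElim_lt {b b' : σ →₀ ℕ} {c c' : τ →₀ ℕ}
    (hdeg : (b.sumElim c).degree = (b'.sumElim c').degree) (hlex : toLex b < toLex b') :
    degLexKey (b.sumElim c) < degLexKey (b'.sumElim c') := by
  obtain ⟨i, heq, hlt⟩ := Finsupp.Lex.lt_iff.1 hlex
  refine degLexKey_lt_iff.2 (Or.inr ⟨hdeg, Sum.inl i, ?_, hlt⟩)
  rintro (j | j) hj
  · exact heq j (Sum.Lex.inl_lt_inl_iff.1 hj)
  · exact absurd hj Sum.Lex.not_inr_lt_inl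

end DegLexKey

section Diagram

open MvPowerSeries

variable {K : Type*} [Field K] {m r : ℕ}

lemma idxNum_lt_iff {i j : Fin m ⊕ Fin r} : idxNum i < idxNum j ↔ toLex i < toLex j := by
  rcases i with i | i <;> rcases j with j | j <;> simp [idxNum] <;> omega

lemma expLt_iff_degLexKey_lt {e e' : Fin m ⊕ Fin r →₀ ℕ} :
    expLt e e' ↔ degLexKey e < degLexKey e' := by
  simp only [expLt, idxNum_lt_iff, degLexKey_lt_iff, and_comm]
  rfl

lemma isInitExp_iff {f : MvPowerSeries (Fin m ⊕ Fin r) K} {e : Fin m ⊕ Fin r →₀ ℕ} :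
    isInitExp f e ↔ coeff e f ≠ 0 ∧ ∀ e', degLexKey e' < degLexKey e → coeff e' f = 0 := by
  refine and_congr_right fun _ => forall_congr' fun e' => ?_
  rw [expLt_iff_degLexKey_lt, eq_comm, ← degLexKey_injective.eq_iff, ← le_iff_eq_or_lt, ne_eq,
    not_imp_comm, not_le]

lemma diagram_eq_initialExponents (J : Ideal (MvPowerSeries (Fin m ⊕ Fin r) K)) :
    diagram J = initialExponents degLexKey J := by
  ext e
  refine exists_congr fun f => and_congr_right fun _ => ?_
  rw [isInitExp_iff, and_iff_right_iff_imp]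
  rintro ⟨hne, -⟩ rfl
  exact hne (map_zero _)

lemma span_image_eq_specialization
    {π : MvPowerSeries (Fin m ⊕ Fin r) K →ₐ[K] MvPowerSeries (Fin m ⊕ Fin r) K}
    (hπ : ∀ f e, coeff e (π f) =
      if ∀ i : Fin m, e (Sum.inl i) = 0 then coeff e f else 0)
    (J : Ideal (MvPowerSeries (Fin m ⊕ Fin r) K)) :
    Ideal.span (π '' J) = specialization J := by
  obtain rfl : π = (rename Function.Embedding.inr).comp (killCompl Function.Embedding.inr) := by
    ext f e
    obtain ⟨b, c, rfl⟩ := exists_eq_sumElim e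
    have hb : (∀ i, b.sumElim c (Sum.inl i) = 0) ↔ b = 0 := by simp [Finsupp.ext_iff]
    simp only [hπ, hb, AlgHom.comp_apply, ← coeff_leftCoeff]
    split_ifs with h
    · rw [h, leftCoeff_zero, leftCoeff_zero, killCompl_rename_app]
    · rw [leftCoeff_rename_of_ne_zero h, map_zero]
  exact (Ideal.map_mapₐ _ _).symm

end Diagram

/-- **Assertion (6.7) in the proof of Theorem 6.18 (Bierstone–Milman,
"Desingularization algorithms I").**
Let `π : R → R` be the `K`-algebra endomorphism of
`R = K[[u₁,…,u_m, v₁,…,v_r]]` setting `u = 0`, `J` an ideal and `J₀` the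
ideal generated by `π(J)`.  If the Hilbert–Samuel functions agree,
`dim_K R/(J + m^{k+1}) = dim_K R/(J₀ + m^{k+1})` for every `k`, then the
diagrams of initial exponents agree: `𝔑(J) = 𝔑(J₀)`. -/
theorem stmt_15 {K : Type*} [Field K] {m r : ℕ}
    (π : MvPowerSeries (Fin m ⊕ Fin r) K →ₐ[K] MvPowerSeries (Fin m ⊕ Fin r) K)
    (hπ : ∀ (f : MvPowerSeries (Fin m ⊕ Fin r) K) (e : Fin m ⊕ Fin r →₀ ℕ),
      MvPowerSeries.coeff e (π f) =
        if ∀ i : Fin m, e (Sum.inl i) = 0 then MvPowerSeries.coeff e f else 0)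
    (J : Ideal (MvPowerSeries (Fin m ⊕ Fin r) K))
    (hfin : ∀ k : ℕ, Module.Finite K
      (MvPowerSeries (Fin m ⊕ Fin r) K ⧸ (J ⊔ mIdl K (Fin m ⊕ Fin r) (k + 1))))
    (hfin₀ : ∀ k : ℕ, Module.Finite K
      (MvPowerSeries (Fin m ⊕ Fin r) K ⧸
        (Ideal.span (⇑π '' (J : Set (MvPowerSeries (Fin m ⊕ Fin r) K))) ⊔
          mIdl K (Fin m ⊕ Fin r) (k + 1))))
    (hdim : ∀ k : ℕ,
      Module.finrank K
        (MvPowerSeries (Fin m ⊕ Fin r) K ⧸ (J ⊔ mIdl K (Fin m ⊕ Fin r) (k + 1)))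
      = Module.finrank K
        (MvPowerSeries (Fin m ⊕ Fin r) K ⧸
          (Ideal.span (⇑π '' (J : Set (MvPowerSeries (Fin m ⊕ Fin r) K))) ⊔
            mIdl K (Fin m ⊕ Fin r) (k + 1)))) :
    diagram J =
      diagram (Ideal.span (⇑π '' (J : Set (MvPowerSeries (Fin m ⊕ Fin r) K)))) := by
  rw [span_image_eq_specialization hπ] at hdim ⊢
  rw [diagram_eq_initialExponents, diagram_eq_initialExponents]
  exact stmt_15_general degLexKey_injective (fun _ _ => degLexKey_lt_of_degree_lt)
    (fun _ _ _ _ => degLexKey_sumElim_lt) hdim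
end
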